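/- Let Y be a real Banach space with the Daugavet property. Then there exist convex, closed, bounded, symmetric (i.e., W = −W) SCD sets W₁, W₂ ⊂ Y such that the intersection W₁ ∩ W₂ is nonempty and is not SCD. -/

import Mathlib

open Bornology Set Pointwise

variable {X : Type*} [NormedAddCommGroup X] [NormedSpace ℝ X]

/-- The sliceSet of `A` given by the functional `f` and `ε > 0`. -/
noncomputable def sliceSet (A : Set X) (f : X →L[ℝ] ℝ) (ε : ℝ) : Set X :=
  {x ∈ A | sSup (f '' A) - ε < f x}

/-- `S` is a sliceSet of `A`: a nonempty set of the form `sliceSet A f ε` with `f ≠ 0`, `ε > 0`. -/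
def IsSlice (A S : Set X) : Prop :=
  S.Nonempty ∧ ∃ f : X →L[ℝ] ℝ, f ≠ 0 ∧ ∃ ε : ℝ, 0 < ε ∧ S = sliceSet A f ε

/-- A sequence of subsets of `A` is determining if every set `B` meeting all of them
has `A` inside the closed convex hull of `B`. -/
def Determining (A : Set X) (V : ℕ → Set X) : Prop :=
  ∀ B : Set X, (∀ n, (B ∩ V n).Nonempty) → A ⊆ closure (convexHull ℝ B)

/-- A bounded set is slicely countably determined if it has a determining sequence of slices. -/
def IsSCD (A : Set X) : Prop :=
  ∃ V : ℕ → Set X, (∀ n, IsSlice A (V n)) ∧ Determining A V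

/-- The Daugavet property: every rank-one operator `x ↦ f x • y` satisfies the
Daugavet equation `‖Id + T‖ = 1 + ‖T‖`. -/
def DaugavetProperty (X : Type*) [NormedAddCommGroup X] [NormedSpace ℝ X] : Prop :=
  ∀ (f : X →L[ℝ] ℝ) (y : X),
    ‖ContinuousLinearMap.id ℝ X + f.smulRight y‖ = 1 + ‖f.smulRight y‖

/-! Call a set `D` reproducing if, for each finite `t ⊆ D`, the points of `D` that are almost
`ℓ¹`-orthogonal to the span of `t` generate the whole closed absolutely convex hull of `D`. Such a
hull is not SCD: given a sequence of slices, one picks in each of them a point almost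
`ℓ¹`-orthogonal to the previous ones and to a fixed nonzero `x ∈ D`, and the span of these points
stays away from `x`.

On the other hand, a hull whose countably many generators are strongly exposed is SCD. Enumerate a
countable `D` with infinite repetition and perturb the enumeration by the even, respectively odd,
half of a null sequence having biorthogonal functionals that vanish on `D`. These functionals
expose the perturbed generators, and they show that the two perturbed hulls meet exactly in the
hull of `D`.

The Daugavet property yields almost `ℓ¹`-orthogonal points in every slice of the unit ball. Since
limits of such points under a finite-rank operator form a convex set, they can also be found in
finite-codimensional subspaces, so that `D` and the biorthogonal sequence can be built together.
-/

open Filter Topology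

section Sequences

variable {α : Type*}

theorem exists_seq_of_step {p : α → Prop} {r : ℕ → α → α → Prop} {a : α} (ha : p a)
    (step : ∀ n x, p x → ∃ y, p y ∧ r n x y) :
    ∃ s : ℕ → α, s 0 = a ∧ (∀ n, p (s n)) ∧ ∀ n, r n (s n) (s (n + 1)) := by
  choose! next hp hr using step
  let s : ℕ → α := fun n => Nat.rec a next n
  have hs : ∀ n, p (s n) := fun n => by
    induction n with
    | zero => exact ha
    | succ n ih => exact hp n _ ih
  exact ⟨s, rfl, hs, fun n => hr n _ (hs n)⟩

theorem exists_seq_range_eq_frequently_eq {s : Set α} (hs : s.Countable) (hne : s.Nonempty) :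
    ∃ y : ℕ → α, range y = s ∧ ∀ x ∈ s, ∃ᶠ j in atTop, y j = x := by
  obtain ⟨z, rfl⟩ := hs.exists_eq_range hne
  refine ⟨fun j => z j.unpair.1, ?_, ?_⟩
  · exact (Function.Surjective.range_comp (f := fun j : ℕ => j.unpair.1)
      (fun k => ⟨Nat.pair k 0, by simp⟩) z)
  · rintro _ ⟨k, rfl⟩
    exact frequently_atTop.2 fun n => ⟨Nat.pair k n, Nat.right_le_pair k n, by simp⟩

end Sequences

section Hull

variable {s : Set X}

theorem mem_closedAbsConvexHull_iff_forall_abs_le {x : X} :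
    x ∈ closedAbsConvexHull ℝ s ↔
      ∀ (f : X →L[ℝ] ℝ) (r : ℝ), (∀ v ∈ s, |f v| ≤ r) → |f x| ≤ r := by
  constructor
  · intro hx f r hf
    have hball : AbsConvex ℝ (f ⁻¹' Metric.closedBall 0 r) :=
      ⟨balanced_closedBall_zero.mulActionHom_preimage (f := (f : X →ₑ[RingHom.id ℝ] ℝ)),
        (convex_closedBall 0 r).linear_preimage (f : X →ₗ[ℝ] ℝ)⟩
    have hsub : s ⊆ f ⁻¹' Metric.closedBall 0 r := fun v hv => by simpa using hf v hv
    have hclosed : IsClosed (f ⁻¹' Metric.closedBall 0 r) :=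
      Metric.isClosed_closedBall.preimage f.continuous
    simpa using closedAbsConvexHull_min hsub hball hclosed hx
  · intro hx
    by_contra hmem
    obtain ⟨f, u, hfu, hux⟩ := geometric_hahn_banach_closed_point
      absConvex_convexClosedHull.2 isClosed_closedAbsConvexHull hmem
    have hs : ∀ v ∈ s, |f v| ≤ u := fun v hv => by
      have hv' : v ∈ closedAbsConvexHull ℝ s := subset_closedAbsConvexHull hv
      have hneg := hfu (-v) (absConvex_convexClosedHull.1.neg_mem_iff.2 hv')
      rw [map_neg] at hneg
      exact abs_le.2 ⟨by linarith, (hfu v hv').le⟩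
    exact absurd (hx f u hs) (not_le.2 (hux.trans_le (le_abs_self _)))

theorem closedAbsConvexHull_eq_closure_convexHull_union_neg :
    closedAbsConvexHull ℝ s = closure (convexHull ℝ (s ∪ -s)) := by
  rw [closedAbsConvexHull_eq_closure_absConvexHull, convexHull_union_neg_eq_absConvexHull]

theorem closedAbsConvexHull_subset_closedBall {M : ℝ} (hM : ∀ v ∈ s, ‖v‖ ≤ M) :
    closedAbsConvexHull ℝ s ⊆ Metric.closedBall 0 M :=
  closedAbsConvexHull_min (fun v hv => mem_closedBall_zero_iff.2 (hM v hv))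
    ⟨balanced_closedBall_zero, convex_closedBall 0 M⟩ Metric.isClosed_closedBall

theorem isBounded_closedAbsConvexHull (hs : IsBounded s) :
    IsBounded (closedAbsConvexHull ℝ s) :=
  let ⟨_, hM⟩ := hs.exists_norm_le
  Metric.isBounded_closedBall.subset (closedAbsConvexHull_subset_closedBall hM)

end Hull

section SmallSlices

theorem isSCD_of_countable_of_small_slices {A s : Set X} (hs : s.Countable) (hne : s.Nonempty)
    (hA : A ⊆ closure (convexHull ℝ s))
    (hslice : ∀ v ∈ s, ∀ ε > 0, ∃ V, IsSlice A V ∧ V ⊆ Metric.ball v ε) : IsSCD A := by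
  obtain ⟨y, rfl⟩ := hs.exists_eq_range hne
  choose V hV hVball using fun j n : ℕ =>
    hslice (y j) (mem_range_self j) (1 / ((n : ℝ) + 1)) Nat.one_div_pos_of_nat
  refine ⟨fun k => V k.unpair.1 k.unpair.2, fun k => hV _ _, fun B hB => hA.trans ?_⟩
  refine closure_minimal (convexHull_min ?_ (convex_convexHull ℝ B).closure) isClosed_closure
  rintro _ ⟨j, rfl⟩
  refine closure_mono (subset_convexHull ℝ B) (Metric.mem_closure_iff.2 fun ε hε => ?_)
  obtain ⟨n, hn⟩ := exists_nat_one_div_lt hε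
  obtain ⟨b, hbB, hbV⟩ := hB (Nat.pair j n)
  simp only [Nat.unpair_pair] at hbV
  exact ⟨b, hbB, (Metric.mem_ball'.1 (hVball j n hbV)).trans hn⟩

variable {t : Set X} {w : X} {φ : X →L[ℝ] ℝ} {M : ℝ}

theorem mul_dist_le_of_mem_closure_convexHull (hM : ∀ v ∈ t, dist v w ≤ M) (hw : 0 ≤ φ w)
    (hφ : ∀ v ∈ t, v ≠ w → φ v ≤ 0) {z : X} (hz : z ∈ closure (convexHull ℝ t)) :
    φ w * dist z w ≤ M * (φ w - φ z) := by
  have hconvex : ConvexOn ℝ univ fun z => φ w * dist z w + (M • φ) z :=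
    ((convexOn_univ_dist w).smul hw).add
      (((M • φ : X →L[ℝ] ℝ) : X →ₗ[ℝ] ℝ).convexOn convex_univ)
  have hclosed : IsClosed {z | φ w * dist z w + (M • φ) z ≤ M * φ w} :=
    isClosed_le (by fun_prop) continuous_const
  have hsub : t ⊆ {z | φ w * dist z w + (M • φ) z ≤ M * φ w} := fun v hv => by
    rcases eq_or_ne v w with rfl | hvw
    · simp
    · have hdist : φ w * dist v w ≤ φ w * M := mul_le_mul_of_nonneg_left (hM v hv) hw
      have hval : M * φ v ≤ 0 :=
        mul_nonpos_of_nonneg_of_nonpos (dist_nonneg.trans (hM v hv)) (hφ v hv hvw)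
      change φ w * dist v w + M * φ v ≤ M * φ w
      linarith
  have hle : φ w * dist z w + M * φ z ≤ M * φ w :=
    closure_minimal (convexHull_min hsub (by simpa using hconvex.convex_le (M * φ w))) hclosed hz
  linarith

theorem exists_isSlice_subset_ball {A : Set X} (hwA : w ∈ A) (hA : A ⊆ closure (convexHull ℝ t))
    (hM : ∀ v ∈ t, dist v w ≤ M) (hM₀ : 0 < M) (hw : 0 < φ w)
    (hφ : ∀ v ∈ t, v ≠ w → φ v ≤ 0) {ε : ℝ} (hε : 0 < ε) :
    ∃ V, IsSlice A V ∧ V ⊆ Metric.ball w ε := by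
  have hkey : ∀ z ∈ A, φ w * dist z w ≤ M * (φ w - φ z) := fun z hz =>
    mul_dist_le_of_mem_closure_convexHull hM hw.le hφ (hA hz)
  have hsup : sSup (φ '' A) = φ w := by
    refine IsGreatest.csSup_eq ⟨mem_image_of_mem φ hwA, forall_mem_image.2 fun z hz => ?_⟩
    have : 0 ≤ φ w * dist z w := by positivity
    exact sub_nonneg.1 (nonneg_of_mul_nonneg_right (this.trans (hkey z hz)) hM₀)
  have hδ : 0 < φ w * ε / M := by positivity
  refine ⟨sliceSet A φ (φ w * ε / M), ⟨⟨w, hwA, by rw [hsup]; linarith⟩, φ, ?_, _, hδ, rfl⟩, ?_⟩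
  · rintro rfl
    simp at hw
  · rintro z ⟨hzA, hz⟩
    have hlt : M * (φ w - φ z) < φ w * ε := by
      rw [hsup] at hz
      rw [mul_comm, ← lt_div_iff₀ hM₀]
      linarith
    exact lt_of_mul_lt_mul_left ((hkey z hzA).trans_lt hlt) hw.le

theorem exists_pos_and_nonpos_on_union_neg {s : Set X}
    (hexp : ∀ v ∈ s, ∃ φ : X →L[ℝ] ℝ, 0 < φ v ∧ ∀ w ∈ s, w ≠ v → φ w = 0) {v : X}
    (hv : v ∈ s ∪ -s) : ∃ φ : X →L[ℝ] ℝ, 0 < φ v ∧ ∀ w ∈ s ∪ -s, w ≠ v → φ w ≤ 0 := by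
  wlog hvs : v ∈ s generalizing v
  · have hv' : -v ∈ s := hv.resolve_left hvs
    obtain ⟨φ, hφv, hφ⟩ := this (Or.inl hv') hv'
    refine ⟨-φ, by simpa using hφv, fun w hw hwv => ?_⟩
    simpa using hφ (-w) (by simpa [or_comm] using hw) (by simpa using hwv)
  obtain ⟨φ, hφv, hφ⟩ := hexp v hvs
  refine ⟨φ, hφv, ?_⟩
  rintro w (hw | hw) hwv
  · exact (hφ w hw hwv).le
  · rcases eq_or_ne (-w) v with rfl | hwv'
    · simpa using hφv.le
    · simpa using (hφ (-w) hw hwv').ge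

theorem isSCD_closedAbsConvexHull {s : Set X} (hs : s.Countable) (hne : s.Nonempty)
    (hbdd : IsBounded s)
    (hexp : ∀ v ∈ s, ∃ φ : X →L[ℝ] ℝ, 0 < φ v ∧ ∀ w ∈ s, w ≠ v → φ w = 0) :
    IsSCD (closedAbsConvexHull ℝ s) := by
  obtain ⟨R, hR, hsR⟩ : ∃ R > 0, ∀ v ∈ s ∪ -s, ‖v‖ ≤ R :=
    (hbdd.union hbdd.neg).exists_pos_norm_le
  have hneg : (-s).Countable := by simpa using hs.image Neg.neg
  rw [closedAbsConvexHull_eq_closure_convexHull_union_neg]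
  refine isSCD_of_countable_of_small_slices (hs.union hneg) hne.inl subset_rfl ?_
  intro v hv ε hε
  have hdist : ∀ w ∈ s ∪ -s, dist w v ≤ R + R := fun w hw =>
    (dist_le_norm_add_norm w v).trans (add_le_add (hsR w hw) (hsR v hv))
  obtain ⟨φ, hφv, hφ⟩ := exists_pos_and_nonpos_on_union_neg hexp hv
  exact exists_isSlice_subset_ball (subset_closure (subset_convexHull ℝ _ hv)) subset_rfl hdist
    (by positivity) hφv hφ hε

end SmallSlices

section Perturbation

variable {y v : ℕ → X} {φ : ℕ → X →L[ℝ] ℝ}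

theorem isBounded_range_add_of_tendsto {E : Type*} [SeminormedAddCommGroup E] {y v : ℕ → E}
    {a : E} (hy : IsBounded (range y)) (hv : Tendsto v atTop (𝓝 a)) : IsBounded (range (y + v)) :=
  (hy.add (Metric.isBounded_range_of_tendsto v hv)).subset <|
    range_subset_iff.2 fun j => add_mem_add (mem_range_self j) (mem_range_self j)

theorem isSCD_closedAbsConvexHull_range_add (hy : IsBounded (range y))
    (hv : Tendsto v atTop (𝓝 0)) (hφy : ∀ i j, φ i (y j) = 0) (hφv : ∀ j, 0 < φ j (v j))
    (hφ : ∀ i j, i ≠ j → φ i (v j) = 0) : IsSCD (closedAbsConvexHull ℝ (range (y + v))) := by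
  refine isSCD_closedAbsConvexHull (countable_range _) (range_nonempty _)
    (isBounded_range_add_of_tendsto hy hv) ?_
  rintro _ ⟨j, rfl⟩
  refine ⟨φ j, by simpa [hφy] using hφv j, ?_⟩
  rintro _ ⟨k, rfl⟩ hkj
  have hjk : j ≠ k := by
    rintro rfl
    exact hkj rfl
  simp [hφy, hφ j k hjk]

theorem range_subset_closedAbsConvexHull_range_add (hy : ∀ i, ∃ᶠ j in atTop, y j = y i)
    (hv : Tendsto v atTop (𝓝 0)) : range y ⊆ closedAbsConvexHull ℝ (range (y + v)) := by
  rintro _ ⟨i, rfl⟩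
  have hlim : Tendsto (fun j => y i + v j) atTop (𝓝 (y i)) := by simpa using hv.const_add (y i)
  refine isClosed_closedAbsConvexHull.mem_of_frequently_of_tendsto ((hy i).mono ?_) hlim
  intro j hj
  exact subset_closedAbsConvexHull ⟨j, by simp [hj]⟩

-- Subtracting from a functional `f` its values at the first `N` perturbations changes neither
-- `f (y j)` nor `f x`, and leaves only the small values `f (v j)` with `N ≤ j`.
theorem mem_closedAbsConvexHull_range_of_mem_range_add (hv : Tendsto v atTop (𝓝 0))
    (hφy : ∀ i j, φ i (y j) = 0) (hφv : ∀ j, φ j (v j) ≠ 0) (hφ : ∀ i j, i ≠ j → φ i (v j) = 0)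
    {x : X} (hx : x ∈ closedAbsConvexHull ℝ (range (y + v))) (hφx : ∀ i, φ i x = 0) :
    x ∈ closedAbsConvexHull ℝ (range y) := by
  rw [mem_closedAbsConvexHull_iff_forall_abs_le] at hx ⊢
  intro f r hf
  refine le_of_forall_pos_le_add fun ε hε => ?_
  have hfv : Tendsto (fun j => |f (v j)|) atTop (𝓝 0) := by
    simpa using ((f.continuous.tendsto 0).comp hv).abs
  obtain ⟨N, hN⟩ := eventually_atTop.1 (hfv.eventually_le_const hε)
  let g : X →L[ℝ] ℝ := f - ∑ i ∈ Finset.range N, (f (v i) / φ i (v i)) • φ i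
  have hg : ∀ z, g z = f z - ∑ i ∈ Finset.range N, f (v i) / φ i (v i) * φ i z := fun z => by
    simp [g]
  have hgy : ∀ j, g (y j) = f (y j) := fun j => by simp [hg, hφy]
  have hgv : ∀ j, |g (v j)| ≤ ε := fun j => by
    have hsum : ∀ i ∈ Finset.range N, i ≠ j → f (v i) / φ i (v i) * φ i (v j) = 0 :=
      fun i _ hij => by rw [hφ i j hij, mul_zero]
    rcases lt_or_ge j N with hj | hj
    · rw [hg, Finset.sum_eq_single_of_mem j (Finset.mem_range.2 hj) hsum,
        div_mul_cancel₀ _ (hφv j), sub_self, abs_zero]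
      exact hε.le
    · rw [hg, Finset.sum_eq_zero fun i hi => hsum i hi
        ((Finset.mem_range.1 hi).trans_le hj).ne, sub_zero]
      exact hN j hj
  have hgx : g x = f x := by simp [hg, hφx]
  rw [← hgx]
  refine hx g (r + ε) (forall_mem_range.2 fun j => ?_)
  calc |g ((y + v) j)| = |f (y j) + g (v j)| := by rw [Pi.add_apply, map_add, hgy]
    _ ≤ r + ε := (abs_add_le _ _).trans (add_le_add (hf _ (mem_range_self j)) (hgv j))

theorem closedAbsConvexHull_range_add_inter_range_add {v' : ℕ → X}
    (hy : ∀ i, ∃ᶠ j in atTop, y j = y i) (hv : Tendsto v atTop (𝓝 0))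
    (hv' : Tendsto v' atTop (𝓝 0)) (hφy : ∀ i j, φ i (y j) = 0) (hφv : ∀ j, φ j (v j) ≠ 0)
    (hφ : ∀ i j, i ≠ j → φ i (v j) = 0) (hφv' : ∀ i j, φ i (v' j) = 0) :
    closedAbsConvexHull ℝ (range (y + v)) ∩ closedAbsConvexHull ℝ (range (y + v')) =
      closedAbsConvexHull ℝ (range y) := by
  refine Subset.antisymm ?_ (subset_inter ?_ ?_)
  · rintro x ⟨hx, hx'⟩
    refine mem_closedAbsConvexHull_range_of_mem_range_add hv hφy hφv hφ hx fun i => ?_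
    refine abs_nonpos_iff.1 (mem_closedAbsConvexHull_iff_forall_abs_le.1 hx' (φ i) 0 ?_)
    simp [hφy, hφv']
  all_goals
    refine closedAbsConvexHull_min (range_subset_closedAbsConvexHull_range_add hy ?_)
      absConvex_convexClosedHull isClosed_closedAbsConvexHull
    assumption

theorem exists_isSCD_inter_eq_closedAbsConvexHull {D : Set X} (hD : D.Countable)
    (hne : D.Nonempty) (hbdd : IsBounded D) {u : ℕ → X} (hu : Tendsto u atTop (𝓝 0))
    (hφu : ∀ j, 0 < φ j (u j)) (hφ : ∀ i j, i ≠ j → φ i (u j) = 0)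
    (hφD : ∀ i, ∀ x ∈ D, φ i x = 0) :
    ∃ s₁ s₂ : Set X, IsBounded s₁ ∧ IsBounded s₂ ∧
      IsSCD (closedAbsConvexHull ℝ s₁) ∧ IsSCD (closedAbsConvexHull ℝ s₂) ∧
      closedAbsConvexHull ℝ s₁ ∩ closedAbsConvexHull ℝ s₂ = closedAbsConvexHull ℝ D := by
  obtain ⟨y, rfl, hy⟩ := exists_seq_range_eq_frequently_eq hD hne
  rw [forall_mem_range] at hy
  have hφy : ∀ i j, φ i (y j) = 0 := fun i j => hφD i _ (mem_range_self j)
  let v : ℕ → X := fun j => u (2 * j)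
  let v' : ℕ → X := fun j => u (2 * j + 1)
  have hv : Tendsto v atTop (𝓝 0) :=
    hu.comp (tendsto_atTop_mono (fun j => by lia : ∀ j, j ≤ 2 * j) tendsto_id)
  have hv' : Tendsto v' atTop (𝓝 0) :=
    hu.comp (tendsto_atTop_mono (fun j => by lia : ∀ j, j ≤ 2 * j + 1) tendsto_id)
  have hφv : ∀ i j, i ≠ j → φ (2 * i) (v j) = 0 := fun i j hij => hφ _ _ (by lia)
  have hφv' : ∀ i j, i ≠ j → φ (2 * i + 1) (v' j) = 0 := fun i j hij => hφ _ _ (by lia)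
  refine ⟨range (y + v), range (y + v'), isBounded_range_add_of_tendsto hbdd hv,
    isBounded_range_add_of_tendsto hbdd hv', ?_, ?_, ?_⟩
  · exact isSCD_closedAbsConvexHull_range_add hbdd hv (fun i => hφy (2 * i)) (fun j => hφu _) hφv
  · exact isSCD_closedAbsConvexHull_range_add hbdd hv' (fun i => hφy (2 * i + 1))
      (fun j => hφu _) hφv'
  · exact closedAbsConvexHull_range_add_inter_range_add hy hv hv' (fun i => hφy (2 * i))
      (fun j => (hφu _).ne') hφv (fun i j => hφ _ _ (by lia))

end Perturbation

/-- `y` is almost orthogonal to `E` in the sense of `ℓ¹`-sums: up to the factor `c`, the norm on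
`E + ℝ y` dominates that of the direct sum `E ⊕₁ ℝ`. -/
def AlmostL1Orthogonal (E : Submodule ℝ X) (c : ℝ) (y : X) : Prop :=
  ∀ e ∈ E, ∀ t : ℝ, c * (‖e‖ + |t|) ≤ ‖e + t • y‖

namespace AlmostL1Orthogonal

variable {E E' P : Submodule ℝ X} {c c' : ℝ} {x y y₁ y₂ z : X}

theorem mono (h : AlmostL1Orthogonal E' c' y) (hE : E ≤ E') (hc : c ≤ c') :
    AlmostL1Orthogonal E c y := fun e he t =>
  (mul_le_mul_of_nonneg_right hc (by positivity)).trans (h e (hE he) t)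

theorem notMem (h : AlmostL1Orthogonal E c y) (hc : 0 < c) : y ∉ E := fun hy => by
  have := h (-y) (E.neg_mem hy) 1
  rw [one_smul, neg_add_cancel, norm_zero, abs_one] at this
  nlinarith [norm_nonneg (-y)]

theorem convex_combination (h₁ : AlmostL1Orthogonal E c y₁)
    (h₂ : AlmostL1Orthogonal (E ⊔ Submodule.span ℝ {y₁}) c y₂) (hc₀ : 0 ≤ c) (hc₁ : c ≤ 1)
    {a b : ℝ} (ha : 0 ≤ a) (hb : 0 ≤ b) (hab : a + b = 1) :
    AlmostL1Orthogonal E (c * c) (a • y₁ + b • y₂) := fun e he t => by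
  have hmem : e + (t * a) • y₁ ∈ E ⊔ Submodule.span ℝ {y₁} :=
    Submodule.add_mem_sup he (Submodule.mem_span_singleton.2 ⟨_, rfl⟩)
  have hnorm : c * (‖e‖ + |t| * a) ≤ ‖e + (t * a) • y₁‖ := by
    simpa [abs_mul, abs_of_nonneg ha] using h₁ e he (t * a)
  calc c * c * (‖e‖ + |t|) = c * (c * (‖e‖ + |t| * a) + c * (|t| * b)) := by
        linear_combination -(c * c * |t|) * hab
    _ ≤ c * (‖e + (t * a) • y₁‖ + 1 * (|t| * b)) := by gcongr
    _ = c * (‖e + (t * a) • y₁‖ + |t * b|) := by rw [one_mul, abs_mul, abs_of_nonneg hb]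
    _ ≤ ‖e + (t * a) • y₁ + (t * b) • y₂‖ := h₂ _ hmem _
    _ = ‖e + t • (a • y₁ + b • y₂)‖ := by rw [smul_add, smul_smul, smul_smul, add_assoc]

theorem sub (h : AlmostL1Orthogonal E c y) {κ : ℝ} (hz : ‖z‖ ≤ κ) :
    AlmostL1Orthogonal E (c - κ) (y - z) := fun e he t => by
  have hκ : 0 ≤ κ := (norm_nonneg z).trans hz
  have htz : ‖t • z‖ ≤ κ * |t| := by
    rw [norm_smul, Real.norm_eq_abs, mul_comm]
    gcongr
  calc (c - κ) * (‖e‖ + |t|) ≤ c * (‖e‖ + |t|) - κ * |t| := by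
        nlinarith [mul_nonneg hκ (norm_nonneg e)]
    _ ≤ ‖e + t • y‖ - ‖t • z‖ := sub_le_sub (h e he t) htz
    _ ≤ ‖e + t • y - t • z‖ := norm_sub_norm_le _ _
    _ = ‖e + t • (y - z)‖ := by rw [smul_sub, add_sub_assoc]

theorem smul (h : AlmostL1Orthogonal E c y) (hc : 0 ≤ c) {s : ℝ} (hs₀ : 0 ≤ s) (hs₁ : s ≤ 1) :
    AlmostL1Orthogonal E (s * c) (s • y) := fun e he t => by
  calc s * c * (‖e‖ + |t|) = c * (s * ‖e‖ + |t| * s) := by ring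
    _ ≤ c * (1 * ‖e‖ + |t| * s) := by gcongr
    _ = c * (‖e‖ + |t * s|) := by rw [one_mul, abs_mul, abs_of_nonneg hs₀]
    _ ≤ ‖e + (t * s) • y‖ := h e he _
    _ = ‖e + t • s • y‖ := by rw [smul_smul]

theorem mul_infDist_le (h : AlmostL1Orthogonal E c y) (hc : 0 ≤ c) (hP : P ≤ E) (hx : x ∈ E) :
    c * Metric.infDist x P ≤ Metric.infDist x (P ⊔ Submodule.span ℝ {y} : Submodule ℝ X) := by
  refine (Metric.le_infDist (Submodule.nonempty _)).2 fun w hw => ?_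
  obtain ⟨p, hp, _, hq, rfl⟩ := Submodule.mem_sup.1 hw
  obtain ⟨t, rfl⟩ := Submodule.mem_span_singleton.1 hq
  calc c * Metric.infDist x P ≤ c * (‖x - p‖ + |-t|) := by
        gcongr
        exact (Metric.infDist_le_dist_of_mem hp).trans
          ((dist_eq_norm x p).trans_le (le_add_of_nonneg_right (abs_nonneg _)))
    _ ≤ ‖x - p + (-t) • y‖ := h _ (E.sub_mem hx (hP hp)) _
    _ = dist x (p + t • y) := by rw [dist_eq_norm, neg_smul, ← sub_eq_add_neg, sub_sub]

end AlmostL1Orthogonal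

/-- Up to closed absolutely convex hulls, `D` is generated by its elements that are almost
`ℓ¹`-orthogonal to any prescribed finite subset. This is the property that prevents the hull of
`D` from being SCD. -/
def AlmostL1Reproducing (D : Set X) : Prop :=
  ∀ t : Finset X, ↑t ⊆ D → ∀ c < 1,
    D ⊆ closedAbsConvexHull ℝ {b ∈ D | AlmostL1Orthogonal (Submodule.span ℝ (t : Set X)) c b}

theorem IsSlice.exists_mem_or_neg_mem {D T V : Set X} (hV : IsSlice (closedAbsConvexHull ℝ D) V)
    (hTD : T ⊆ D) (hDT : D ⊆ closedAbsConvexHull ℝ T) : ∃ b ∈ T, b ∈ V ∨ -b ∈ V := by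
  obtain ⟨⟨z, hz⟩, f, -, ε, -, rfl⟩ := hV
  by_contra! hT
  have hle : ∀ b ∈ T, |f b| ≤ sSup (f '' closedAbsConvexHull ℝ D) - ε := fun b hb => by
    have hbD : b ∈ closedAbsConvexHull ℝ D := subset_closedAbsConvexHull (hTD hb)
    have hpos := not_lt.1 fun h => (hT b hb).1 ⟨hbD, h⟩
    have hneg := not_lt.1 fun h =>
      (hT b hb).2 ⟨absConvex_convexClosedHull.1.neg_mem_iff.2 hbD, h⟩
    rw [map_neg] at hneg
    exact abs_le.2 ⟨by linarith, hpos⟩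
  have hzT : z ∈ closedAbsConvexHull ℝ T :=
    closedAbsConvexHull_min hDT absConvex_convexClosedHull isClosed_closedAbsConvexHull hz.1
  exact (hz.2.trans_le (le_abs_self _)).not_ge
    (mem_closedAbsConvexHull_iff_forall_abs_le.1 hzT f _ hle)

theorem AlmostL1Reproducing.exists_superset_lt_infDist {D V : Set X}
    (hD : AlmostL1Reproducing D) (hV : IsSlice (closedAbsConvexHull ℝ D) V) {x : X} (hx : x ∈ D)
    {t : Finset X} (htD : ↑t ⊆ D) {d : ℝ} (hd : 0 ≤ d)
    (hdt : d < Metric.infDist x (Submodule.span ℝ (t : Set X))) :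
    ∃ t' : Finset X, (↑t' ⊆ D ∧ d < Metric.infDist x (Submodule.span ℝ (t' : Set X))) ∧
      t ⊆ t' ∧ ∃ b ∈ V, b ∈ Submodule.span ℝ (t' : Set X) := by
  classical
  obtain ⟨c, hdc, hc⟩ := exists_between ((div_lt_one (hd.trans_lt hdt)).2 hdt)
  have hc₀ : 0 ≤ c := (div_nonneg hd (hd.trans hdt.le)).trans hdc.le
  have hxt : ↑(insert x t) ⊆ D := by
    rw [Finset.coe_insert]
    exact insert_subset hx htD
  obtain ⟨b, ⟨hbD, hb⟩, hbV⟩ :=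
    hV.exists_mem_or_neg_mem (sep_subset _ _) (hD (insert x t) hxt c hc)
  have hbt : b ∈ Submodule.span ℝ (↑(insert b t) : Set X) := Submodule.subset_span (by simp)
  refine ⟨insert b t, ⟨?_, ((div_lt_iff₀ (hd.trans_lt hdt)).1 hdc).trans_le ?_⟩,
    Finset.subset_insert b t, ?_⟩
  · rw [Finset.coe_insert]
    exact insert_subset hbD htD
  · rw [Finset.coe_insert, Submodule.span_insert, sup_comm]
    exact hb.mul_infDist_le hc₀ (Submodule.span_mono (by simp)) (Submodule.subset_span (by simp))
  · exact hbV.elim (fun h => ⟨b, h, hbt⟩) fun h => ⟨-b, h, Submodule.neg_mem _ hbt⟩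

theorem AlmostL1Reproducing.not_isSCD {D : Set X} (hD : AlmostL1Reproducing D) {x : X}
    (hx : x ∈ D) (hx₀ : x ≠ 0) : ¬ IsSCD (closedAbsConvexHull ℝ D) := by
  rintro ⟨V, hV, hdet⟩
  have hnorm : 0 < ‖x‖ := norm_pos_iff.2 hx₀
  let p : Finset X → Prop := fun t =>
    ↑t ⊆ D ∧ ‖x‖ / 2 < Metric.infDist x (Submodule.span ℝ (t : Set X))
  have hempty : p ∅ := by simpa [p] using hnorm
  obtain ⟨t, -, ht, hstep⟩ := exists_seq_of_step (p := p) hempty fun n t ht =>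
    hD.exists_superset_lt_infDist (hV n) hx ht.1 (by positivity) ht.2
  choose hsub b hbV hbt using hstep
  have hmono : Monotone fun n => Submodule.span ℝ (t n : Set X) :=
    monotone_nat_of_le_succ fun n => Submodule.span_mono (Finset.coe_subset.2 (hsub n))
  let S : Submodule ℝ X := ⨆ n, Submodule.span ℝ (t n : Set X)
  have hbS : range b ⊆ S := range_subset_iff.2 fun n => Submodule.mem_iSup_of_mem (n + 1) (hbt n)
  have hxS : x ∈ closure (S : Set X) :=
    closure_mono (convexHull_min hbS S.convex) <|
      hdet (range b) (fun n => ⟨b n, mem_range_self n, hbV n⟩) (subset_closedAbsConvexHull hx)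
  obtain ⟨z, hzS, hxz⟩ := Metric.mem_closure_iff.1 hxS (‖x‖ / 2) (by positivity)
  obtain ⟨n, hzn⟩ := (Submodule.mem_iSup_of_directed _ hmono.directed_le).1 hzS
  exact (((ht n).2.trans_le (Metric.infDist_le_dist_of_mem hzn)).trans hxz).false

section Daugavet

theorem exists_norm_le_one_lt_apply (f : X →L[ℝ] ℝ) {r : ℝ} (hr : r < ‖f‖) :
    ∃ z, ‖z‖ ≤ 1 ∧ r < f z := by
  obtain ⟨z, hz, hrz⟩ := f.exists_lt_apply_of_lt_opNorm hr
  rcases abs_choice (f z) with habs | habs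
  · exact ⟨z, hz.le, by rwa [Real.norm_eq_abs, habs] at hrz⟩
  · exact ⟨-z, by simpa using hz.le, by rwa [Real.norm_eq_abs, habs, ← map_neg] at hrz⟩

theorem apply_le_norm_of_norm_le_one (f : X →L[ℝ] ℝ) {z : X} (hz : ‖z‖ ≤ 1) : f z ≤ ‖f‖ :=
  (le_abs_self _).trans (f.unit_le_opNorm z hz)

theorem apply_le_one_of_norm_le_one {f : X →L[ℝ] ℝ} (hf : ‖f‖ ≤ 1) {z : X} (hz : ‖z‖ ≤ 1) :
    f z ≤ 1 :=
  (apply_le_norm_of_norm_le_one f hz).trans hf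

theorem mul_add_le_norm_smul_add_smul {x y : X} {c : ℝ} (hx : ‖x‖ ≤ 1) (hy : ‖y‖ ≤ 1)
    (hxy : 1 + c ≤ ‖x + y‖) {a b : ℝ} (ha : 0 ≤ a) (hb : 0 ≤ b) :
    c * (a + b) ≤ ‖a • x + b • y‖ := by
  obtain ⟨g, hg, hgxy⟩ := exists_dual_vector'' ℝ (x + y)
  have hsum : g x + g y = ‖x + y‖ := by rw [← map_add, hgxy, RCLike.ofReal_real_eq_id, id]
  have hgx : c ≤ g x := by linarith [apply_le_one_of_norm_le_one hg hy]
  have hgy : c ≤ g y := by linarith [apply_le_one_of_norm_le_one hg hx]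
  calc c * (a + b) = a * c + b * c := by ring
    _ ≤ a * g x + b * g y := by gcongr
    _ = g (a • x + b • y) := by simp
    _ ≤ ‖a • x + b • y‖ := (le_abs_self _).trans (g.le_of_opNorm_le hg _ |>.trans_eq (one_mul _))

theorem almostL1Orthogonal_of_unit {E : Submodule ℝ X} {c : ℝ} {y : X} (hy : ‖y‖ ≤ 1)
    (hcy : c ≤ ‖y‖) (hE : ∀ e ∈ E, ‖e‖ = 1 → 1 + c ≤ ‖e + y‖) : AlmostL1Orthogonal E c y := by
  intro e he t
  wlog ht : 0 ≤ t generalizing e t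
  · have := this (-e) (E.neg_mem he) (-t) (by linarith)
    rwa [norm_neg, abs_neg, neg_smul, ← neg_add, norm_neg] at this
  rcases eq_or_ne e 0 with rfl | he₀
  · rw [norm_zero, zero_add, zero_add, norm_smul, Real.norm_eq_abs, mul_comm]
    gcongr
  · rw [abs_of_nonneg ht]
    have hunit : ‖‖e‖⁻¹ • e‖ = 1 := by
      rw [norm_smul, norm_inv, norm_norm, inv_mul_cancel₀ (norm_ne_zero_iff.2 he₀)]
    have hsmul : ‖e‖ • ‖e‖⁻¹ • e = e := smul_inv_smul₀ (norm_ne_zero_iff.2 he₀) e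
    have := mul_add_le_norm_smul_add_smul hunit.le hy (hE _ (E.smul_mem _ he) hunit)
      (norm_nonneg e) ht
    rwa [hsmul] at this

theorem exists_finset_net_unit_sphere (E : Submodule ℝ X) [FiniteDimensional ℝ E] {η : ℝ}
    (hη : 0 < η) :
    ∃ N : Finset X, (∀ x ∈ N, ‖x‖ = 1) ∧ ∀ e ∈ E, ‖e‖ = 1 → ∃ x ∈ N, dist e x < η := by
  classical
  obtain ⟨N, hN, hfin, hcover⟩ := (isCompact_sphere (0 : E) 1).finite_cover_balls hη
  refine ⟨hfin.toFinset.image (↑), ?_, fun e he hnorm => ?_⟩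
  · simp only [Finset.mem_image, Finite.mem_toFinset]
    rintro _ ⟨x, hx, rfl⟩
    simpa using hN hx
  · obtain ⟨x, hxN, hx⟩ := mem_iUnion₂.1 (hcover (show (⟨e, he⟩ : E) ∈ _ by simpa using hnorm))
    exact ⟨x, Finset.mem_image_of_mem _ (hfin.mem_toFinset.2 hxN), hx⟩

namespace DaugavetProperty

theorem nontrivial (h : DaugavetProperty X) : Nontrivial X := by
  by_contra hX
  rw [not_nontrivial_iff_subsingleton] at hX
  have := h 0 0
  simp [Subsingleton.elim (ContinuousLinearMap.id ℝ X) 0] at this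

theorem exists_almost_norming_pair (h : DaugavetProperty X) {f : X →L[ℝ] ℝ} {x : X}
    (hx : ‖x‖ = 1) {ε : ℝ} (hε : 0 < ε) (hεf : ε ≤ ‖f‖) :
    ∃ (g : X →L[ℝ] ℝ) (z : X), ‖g‖ ≤ 1 ∧ ‖z‖ ≤ 1 ∧ 0 < g x ∧ 1 + ‖f‖ - ε < g z + f z * g x := by
  have hnorm : 1 + ‖f‖ - ε < ‖ContinuousLinearMap.id ℝ X + f.smulRight x‖ := by
    rw [h f x, ContinuousLinearMap.norm_smulRight_apply, hx]
    linarith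
  obtain ⟨z, hz, hlt⟩ := ContinuousLinearMap.exists_lt_apply_of_lt_opNorm _ hnorm
  obtain ⟨g, hg, hgz⟩ := exists_dual_vector'' ℝ (z + f z • x)
  have hsum : 1 + ‖f‖ - ε < g z + f z * g x := by
    rw [← smul_eq_mul, ← map_smul, ← map_add, hgz]
    exact hlt
  have hgx : g x ≠ 0 := fun h₀ => by
    have := apply_le_one_of_norm_le_one hg hz.le
    rw [h₀] at hsum
    linarith
  rcases hgx.lt_or_gt with hneg | hpos
  · exact ⟨-g, -z, by rwa [norm_neg], by simpa using hz.le, by simpa using hneg,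
      by simpa using hsum⟩
  · exact ⟨g, z, hg, hz.le, hpos, hsum⟩

theorem exists_subslice (h : DaugavetProperty X) {f : X →L[ℝ] ℝ} (hf : f ≠ 0) {x : X}
    (hx : ‖x‖ = 1) {δ : ℝ} (hδ : 0 < δ) :
    ∃ g : X →L[ℝ] ℝ, g ≠ 0 ∧ ∃ δ' > 0, ∀ y, ‖y‖ ≤ 1 → ‖g‖ - δ' < g y →
      ‖f‖ - δ < f y ∧ 2 - δ < ‖x + y‖ := by
  have hf₀ : 0 < ‖f‖ := norm_pos_iff.2 hf
  obtain ⟨ε, hε, hεle⟩ : ∃ ε > 0, ε ≤ ‖f‖ ∧ ε ≤ δ / 4 ∧ ε ≤ ‖f‖ * (δ / 4) :=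
    ⟨min ‖f‖ (min (δ / 4) (‖f‖ * (δ / 4))), by positivity, by simp⟩
  obtain ⟨hεf, hεδ, hεfδ⟩ := hεle
  obtain ⟨g, z, hg, hz, hgx, hgz⟩ := h.exists_almost_norming_pair hx hε hεf
  have hgz₁ : g z ≤ 1 := apply_le_one_of_norm_le_one hg hz
  have hgx₁ : g x ≤ 1 := apply_le_one_of_norm_le_one hg hx.le
  have hfz : 0 < f z := pos_of_mul_pos_left (by linarith) hgx.le
  have hnorm : 1 + ‖f‖ - ε < ‖f + g‖ := by
    have := apply_le_norm_of_norm_le_one (f + g) hz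
    rw [add_apply] at this
    linarith [mul_le_of_le_one_right hfz.le hgx₁]
  have hgx₂ : 1 - δ / 4 ≤ g x := by
    have : f z * g x ≤ ‖f‖ * g x := by gcongr; exact apply_le_norm_of_norm_le_one f hz
    exact le_of_mul_le_mul_left (by linarith) hf₀
  refine ⟨f + g, norm_pos_iff.1 (by linarith), ε, hε, fun y hy hfgy => ?_⟩
  rw [add_apply] at hfgy
  have hfy := apply_le_norm_of_norm_le_one f hy
  have hgy := apply_le_one_of_norm_le_one hg hy
  refine ⟨by linarith, ?_⟩
  have hgxy : g x + g y ≤ ‖x + y‖ := by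
    rw [← map_add]
    exact (le_abs_self _).trans (g.le_of_opNorm_le hg _ |>.trans_eq (one_mul _))
  linarith

theorem exists_subslice_finset (h : DaugavetProperty X) {f : X →L[ℝ] ℝ} (hf : f ≠ 0)
    {t : Finset X} (ht : ∀ x ∈ t, ‖x‖ = 1) {δ : ℝ} (hδ : 0 < δ) :
    ∃ g : X →L[ℝ] ℝ, g ≠ 0 ∧ ∃ δ' > 0, ∀ y, ‖y‖ ≤ 1 → ‖g‖ - δ' < g y →
      ‖f‖ - δ < f y ∧ ∀ x ∈ t, 2 - δ < ‖x + y‖ := by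
  classical
  induction t using Finset.induction_on with
  | empty => exact ⟨f, hf, δ, hδ, by simp⟩
  | insert x t _ ih =>
    rw [Finset.forall_mem_insert] at ht
    obtain ⟨g, hg, δ₁, hδ₁, hgt⟩ := ih ht.2
    obtain ⟨g', hg', δ', hδ', hgx⟩ := h.exists_subslice hg ht.1 (lt_min hδ hδ₁)
    refine ⟨g', hg', δ', hδ', fun y hy hgy => ?_⟩
    obtain ⟨hslice, hxy⟩ := hgx y hy hgy
    obtain ⟨hfy, hty⟩ := hgt y hy (by linarith [min_le_right δ δ₁])
    exact ⟨hfy, Finset.forall_mem_insert .. |>.2 ⟨by linarith [min_le_left δ δ₁], hty⟩⟩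

theorem exists_norm_add_finset (h : DaugavetProperty X) (f : X →L[ℝ] ℝ) {t : Finset X}
    (ht : ∀ x ∈ t, ‖x‖ = 1) {δ : ℝ} (hδ : 0 < δ) :
    ∃ y, ‖y‖ ≤ 1 ∧ ‖f‖ - δ < f y ∧ ∀ x ∈ t, 2 - δ < ‖x + y‖ := by
  have := h.nontrivial
  rcases eq_or_ne f 0 with rfl | hf
  · obtain ⟨x, hx⟩ := exists_ne (0 : X)
    obtain ⟨f, hf, -⟩ := exists_dual_vector ℝ x (norm_ne_zero_iff.2 hx)
    obtain ⟨g, -, δ', hδ', hg⟩ :=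
      h.exists_subslice_finset (norm_ne_zero_iff.1 (hf.trans_ne one_ne_zero)) ht hδ
    obtain ⟨y, hy, hgy⟩ := exists_norm_le_one_lt_apply g (sub_lt_self _ hδ')
    exact ⟨y, hy, by simpa using hδ, (hg y hy hgy).2⟩
  · obtain ⟨g, -, δ', hδ', hg⟩ := h.exists_subslice_finset hf ht hδ
    obtain ⟨y, hy, hgy⟩ := exists_norm_le_one_lt_apply g (sub_lt_self _ hδ')
    exact ⟨y, hy, hg y hy hgy⟩

theorem exists_almostL1Orthogonal (h : DaugavetProperty X) (E : Submodule ℝ X)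
    [FiniteDimensional ℝ E] {c : ℝ} (hc : c < 1) (f : X →L[ℝ] ℝ) {δ : ℝ} (hδ : 0 < δ) :
    ∃ y, ‖y‖ ≤ 1 ∧ AlmostL1Orthogonal E c y ∧ ‖f‖ - δ < f y := by
  classical
  have := h.nontrivial
  obtain ⟨x₁, hx₁⟩ := exists_norm_eq X zero_le_one
  obtain ⟨η, hη, hcη⟩ : ∃ η > 0, 1 + c + η = 2 - η := ⟨(1 - c) / 2, by linarith, by ring⟩
  obtain ⟨N, hN, hnet⟩ := exists_finset_net_unit_sphere E hη
  obtain ⟨y, hy, hfy, hNy⟩ := h.exists_norm_add_finset f (t := insert x₁ N)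
    (Finset.forall_mem_insert .. |>.2 ⟨hx₁, hN⟩) (lt_min hδ hη)
  rw [Finset.forall_mem_insert] at hNy
  have hmin : 2 - η ≤ 2 - min δ η := sub_le_sub_left (min_le_right δ η) 2
  refine ⟨y, hy, almostL1Orthogonal_of_unit hy ?_ fun e he hnorm => ?_,
    by linarith [min_le_left δ η]⟩
  · linarith [norm_add_le x₁ y]
  · obtain ⟨x, hxN, hex⟩ := hnet e he hnorm
    have hdist : ‖x + y‖ ≤ ‖e + y‖ + dist e x := by
      rw [dist_comm, dist_eq_norm, ← add_sub_add_right_eq_sub x e y]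
      exact norm_le_norm_add_norm_sub' _ _
    linarith [hNy.2 x hxN]

end DaugavetProperty

end Daugavet

section ClusterPoints

variable (X) in
/-- The filter on the unit ball along which points become `ℓ¹`-orthogonal, with constants tending
to `1`, to every finite-dimensional subspace. -/
def almostL1OrthogonalFilter : Filter X :=
  ⨅ p ∈ {p : Submodule ℝ X × ℝ | FiniteDimensional ℝ p.1 ∧ p.2 < 1},
    𝓟 {y | ‖y‖ ≤ 1 ∧ AlmostL1Orthogonal p.1 p.2 y}

theorem frequently_almostL1OrthogonalFilter_iff {Q : X → Prop} :
    (∃ᶠ y in almostL1OrthogonalFilter X, Q y) ↔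
      ∀ E : Submodule ℝ X, FiniteDimensional ℝ E → ∀ c < 1,
        ∃ y, ‖y‖ ≤ 1 ∧ AlmostL1Orthogonal E c y ∧ Q y := by
  have hdir : DirectedOn ((fun p : Submodule ℝ X × ℝ => {y | ‖y‖ ≤ 1 ∧
      AlmostL1Orthogonal p.1 p.2 y}) ⁻¹'o (· ≥ ·)) {p | FiniteDimensional ℝ p.1 ∧ p.2 < 1} := by
    rintro ⟨E, c⟩ ⟨hE, hc⟩ ⟨E', c'⟩ ⟨hE', hc'⟩
    refine ⟨(E ⊔ E', max c c'), ⟨Submodule.finiteDimensional_sup E E', max_lt hc hc'⟩, ?_, ?_⟩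
    · exact fun y hy => ⟨hy.1, hy.2.mono le_sup_left (le_max_left c c')⟩
    · exact fun y hy => ⟨hy.1, hy.2.mono le_sup_right (le_max_right c c')⟩
  have hne : {p : Submodule ℝ X × ℝ | FiniteDimensional ℝ p.1 ∧ p.2 < 1}.Nonempty :=
    ⟨(⊥, 0), Module.Finite.bot ℝ X, zero_lt_one⟩
  have hbasis := hasBasis_biInf_principal hdir hne
  rw [almostL1OrthogonalFilter, hbasis.frequently_iff]
  simp only [Prod.forall, mem_ofPred_eq, and_imp, and_assoc]
  exact forall_congr' fun E => ⟨fun hQ hE c => hQ c hE, fun hQ c hE => hQ hE c⟩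

variable {V : Type*} [NormedAddCommGroup V] [NormedSpace ℝ V]

theorem convex_setOf_mapClusterPt_almostL1OrthogonalFilter (G : X →L[ℝ] V) :
    Convex ℝ {v | MapClusterPt v (almostL1OrthogonalFilter X) G} := by
  intro v₁ hv₁ v₂ hv₂ a b ha hb hab
  simp only [mem_ofPred_eq, mapClusterPt_iff_frequently,
    frequently_almostL1OrthogonalFilter_iff] at hv₁ hv₂ ⊢
  intro s hs E hE c hc
  have hcont : Continuous fun p : V × V => a • p.1 + b • p.2 := by fun_prop
  obtain ⟨s₁, hs₁, s₂, hs₂, hsub⟩ :=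
    mem_nhds_prod_iff.1 (hcont.continuousAt.preimage_mem_nhds (x := (v₁, v₂)) hs)
  have hsqrt : √(max c 0) < 1 := (Real.sqrt_lt' one_pos).2 (by simpa using hc)
  have hsq : c ≤ √(max c 0) * √(max c 0) := by
    rw [Real.mul_self_sqrt (le_max_right c 0)]
    exact le_max_left c 0
  obtain ⟨y₁, hy₁, hE₁, hG₁⟩ := hv₁ s₁ hs₁ E hE _ hsqrt
  obtain ⟨y₂, hy₂, hE₂, hG₂⟩ := hv₂ s₂ hs₂ (E ⊔ Submodule.span ℝ {y₁})
    (Submodule.finiteDimensional_sup _ _) _ hsqrt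
  refine ⟨a • y₁ + b • y₂, ?_, ?_, ?_⟩
  · rw [← mem_closedBall_zero_iff] at hy₁ hy₂ ⊢
    exact convex_closedBall 0 1 hy₁ hy₂ ha hb hab
  · exact (hE₁.convex_combination hE₂ (Real.sqrt_nonneg _) hsqrt.le ha hb hab).mono le_rfl hsq
  · simpa using hsub (mk_mem_prod hG₁ hG₂)

variable [FiniteDimensional ℝ V]

theorem DaugavetProperty.mapClusterPt_almostL1OrthogonalFilter (h : DaugavetProperty X)
    (G : X →L[ℝ] V) {x : X} (hx : ‖x‖ ≤ 1) :
    MapClusterPt (G x) (almostL1OrthogonalFilter X) G := by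
  by_contra hGx
  have hclosed : IsClosed {v | MapClusterPt v (almostL1OrthogonalFilter X) G} :=
    isClosed_setOfPred_clusterPt
  obtain ⟨ℓ, u, hℓu, hux⟩ := geometric_hahn_banach_closed_point
    (convex_setOf_mapClusterPt_almostL1OrthogonalFilter G) hclosed hGx
  have hcompact : IsCompact (Metric.closedBall (0 : V) ‖G‖ ∩ {v | u ≤ ℓ v}) :=
    (isCompact_closedBall 0 ‖G‖).inter_right (isClosed_le continuous_const ℓ.continuous)
  have hfreq : ∃ᶠ y in almostL1OrthogonalFilter X,
      G y ∈ Metric.closedBall 0 ‖G‖ ∩ {v | u ≤ ℓ v} := by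
    refine frequently_almostL1OrthogonalFilter_iff.2 fun E hE c hc => ?_
    obtain ⟨y, hy, hEy, hℓy⟩ := h.exists_almostL1Orthogonal E hc (ℓ.comp G) (sub_pos.2 hux)
    refine ⟨y, hy, hEy, mem_closedBall_zero_iff.2 (G.unit_le_opNorm y hy), ?_⟩
    have hℓx : ℓ (G x) ≤ ‖ℓ.comp G‖ := apply_le_norm_of_norm_le_one (ℓ.comp G) hx
    rw [ContinuousLinearMap.comp_apply] at hℓy
    rw [mem_ofPred_eq]
    linarith
  obtain ⟨v, ⟨-, huv⟩, hv⟩ := hcompact.exists_mapClusterPt_of_frequently hfreq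
  exact (hℓu v hv).not_ge huv

theorem exists_norm_le_preimage (P : X →L[ℝ] V) :
    ∃ C ≥ 1, ∀ y, ∃ z, P z = P y ∧ ‖z‖ ≤ C * ‖P y‖ := by
  obtain ⟨R, hR⟩ := P.rangeRestrict.exists_rightInverse_of_surjective
    (LinearMap.range_eq_top.2 P.surjective_rangeRestrict)
  refine ⟨max 1 ‖R‖, le_max_left _ _, fun y => ⟨R (P.rangeRestrict y), ?_, ?_⟩⟩
  · exact congrArg Subtype.val (DFunLike.congr_fun hR (P.rangeRestrict y))
  · exact R.le_of_opNorm_le (le_max_right _ _) _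

theorem exists_pos_small_perturbation {c c₁ a b ε : ℝ} (hc : c < c₁) (hc₁ : 0 < c₁)
    (hε : 0 < ε) :
    ∃ κ > 0, κ ≤ c₁ ∧ c ≤ (1 + κ)⁻¹ * (c₁ - κ) ∧ a - ε < (1 + κ)⁻¹ * (a - κ - b * κ) := by
  have hcont₁ : ContinuousAt (fun κ : ℝ => (1 + κ)⁻¹ * (c₁ - κ)) 0 := by
    fun_prop (disch := norm_num)
  have hcont₂ : ContinuousAt (fun κ : ℝ => (1 + κ)⁻¹ * (a - κ - b * κ)) 0 := by
    fun_prop (disch := norm_num)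
  have hev₁ := hcont₁.eventually_const_lt (u := c) (by simpa using hc)
  have hev₂ := hcont₂.eventually_const_lt (u := a - ε) (by simpa using hε)
  obtain ⟨κ, ⟨⟨hκ₁, hκ₂⟩, hκc₁⟩, hκ⟩ :=
    (((hev₁.and hev₂).and (eventually_le_nhds hc₁)).filter_mono
      (nhdsWithin_le_nhds (s := Ioi 0)) |>.and self_mem_nhdsWithin).exists
  exact ⟨κ, hκ, hκc₁, hκ₁.le, hκ₂⟩

-- A point supplied by the cluster property is only almost in the kernel of `P`; subtracting a
-- small preimage of its value under `P` and renormalizing corrects this.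
theorem DaugavetProperty.exists_almostL1Orthogonal_mem_ker (h : DaugavetProperty X)
    (P : X →L[ℝ] V) (E : Submodule ℝ X) [FiniteDimensional ℝ E] {c : ℝ} (hc : c < 1)
    (f : X →L[ℝ] ℝ) {x : X} (hx : ‖x‖ ≤ 1) (hPx : P x = 0) {ε : ℝ} (hε : 0 < ε) :
    ∃ y, ‖y‖ ≤ 1 ∧ P y = 0 ∧ AlmostL1Orthogonal E c y ∧ f x - ε < f y := by
  obtain ⟨C, hC, hpre⟩ := exists_norm_le_preimage P
  obtain ⟨c₁, hcc₁, hc₁⟩ := exists_between (max_lt hc zero_lt_one)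
  rw [max_lt_iff] at hcc₁
  obtain ⟨κ, hκ, hκc₁, hcκ, hfκ⟩ :=
    exists_pos_small_perturbation (a := f x) (b := ‖f‖) hcc₁.1 hcc₁.2 hε
  have hball : Metric.ball (P.prod f x) (κ / C) ∈ 𝓝 (P.prod f x) :=
    Metric.ball_mem_nhds _ (by positivity)
  obtain ⟨y, hy, hEy, hPf⟩ := frequently_almostL1OrthogonalFilter_iff.1
    (mapClusterPt_iff_frequently.1 (h.mapClusterPt_almostL1OrthogonalFilter (P.prod f) hx) _ hball)
    E inferInstance c₁ hc₁
  obtain ⟨hPy, hfy⟩ : ‖P y‖ < κ / C ∧ |f y - f x| < κ / C := by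
    simpa [Prod.dist_eq, dist_eq_norm, hPx] using hPf
  obtain ⟨z, hPz, hz⟩ := hpre y
  have hzκ : ‖z‖ ≤ κ := by
    calc ‖z‖ ≤ C * (κ / C) := hz.trans (by gcongr)
      _ = κ := mul_div_cancel₀ κ (by positivity)
  have hκ₁ : (1 + κ)⁻¹ ≤ 1 := inv_le_one_of_one_le₀ (by linarith)
  refine ⟨(1 + κ)⁻¹ • (y - z), ?_, by simp [hPz], ?_, hfκ.trans_le ?_⟩
  · rw [norm_smul, Real.norm_of_nonneg (by positivity), inv_mul_le_one₀ (by positivity)]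
    exact (norm_sub_le y z).trans (add_le_add hy hzκ)
  · exact ((hEy.sub hzκ).smul (sub_nonneg.2 hκc₁) (by positivity) hκ₁).mono le_rfl hcκ
  · have hfz : f z ≤ ‖f‖ * κ := (le_abs_self _).trans (f.le_opNorm_of_le hzκ)
    have hfx : f x - κ ≤ f y := by linarith [(abs_lt.1 hfy).1, div_le_self hκ.le hC]
    rw [map_smul, map_sub, smul_eq_mul]
    gcongr

theorem DaugavetProperty.mem_closure_convexHull_almostL1Orthogonal (h : DaugavetProperty X)
    (P : X →L[ℝ] V) (E : Submodule ℝ X) [FiniteDimensional ℝ E] {c : ℝ} (hc : c < 1)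
    {x : X} (hx : ‖x‖ ≤ 1) (hPx : P x = 0) :
    x ∈ closure (convexHull ℝ {y | ‖y‖ ≤ 1 ∧ P y = 0 ∧ AlmostL1Orthogonal E c y}) := by
  by_contra hmem
  obtain ⟨f, u, hfu, hux⟩ := geometric_hahn_banach_closed_point (convex_convexHull ℝ _).closure
    isClosed_closure hmem
  obtain ⟨y, hy, hPy, hEy, hfy⟩ :=
    h.exists_almostL1Orthogonal_mem_ker P E hc f hx hPx (sub_pos.2 hux)
  have := hfu y (subset_closure (subset_convexHull ℝ _ ⟨hy, hPy, hEy⟩))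
  linarith

end ClusterPoints

section Construction

theorem exists_finset_subset_forall_dist_lt {F : Finset X} {T : Set X}
    (hF : ∀ x ∈ F, x ∈ closure (convexHull ℝ T)) {ε : ℝ} (hε : 0 < ε) :
    ∃ D : Finset X, ↑D ⊆ T ∧ ∀ x ∈ F, ∃ p ∈ convexHull ℝ (D : Set X), dist x p < ε := by
  classical
  have happrox : ∀ x ∈ F, ∃ D : Finset X, ↑D ⊆ T ∧
      ∃ p ∈ convexHull ℝ (D : Set X), dist x p < ε := by
    intro x hx
    obtain ⟨p, hpT, hxp⟩ := Metric.mem_closure_iff.1 (hF x hx) ε hε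
    rw [convexHull_eq_union_convexHull_finite_subsets] at hpT
    obtain ⟨D, hDT, hpD⟩ := mem_iUnion₂.1 hpT
    exact ⟨D, hDT, p, hpD, hxp⟩
  choose! D hDT hD using happrox
  refine ⟨F.biUnion D, by simpa using hDT, fun x hx => ?_⟩
  obtain ⟨p, hp, hxp⟩ := hD x hx
  exact ⟨p, convexHull_mono (Finset.coe_subset.2 (Finset.subset_biUnion_of_mem D hx)) hp, hxp⟩

theorem exists_apply_eq_one_of_notMem {W : Submodule ℝ X} (hW : IsClosed (W : Set X)) {u : X}
    (hu : u ∉ W) : ∃ φ : X →L[ℝ] ℝ, φ u = 1 ∧ ∀ w ∈ W, φ w = 0 := by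
  obtain ⟨ψ, hψ⟩ := SeparatingDual.exists_eq_one (R := ℝ) (x := W.mkQ u)
    (by simpa [Submodule.Quotient.mk_eq_zero] using hu)
  exact ⟨ψ.comp W.mkQL, hψ, fun w hw => by simp [(Submodule.Quotient.mk_eq_zero W).2 hw]⟩

theorem DaugavetProperty.exists_small_mem_ker_pos_apply (h : DaugavetProperty X) {V : Type*}
    [NormedAddCommGroup V] [NormedSpace ℝ V] [FiniteDimensional ℝ V] (P : X →L[ℝ] V)
    (W : Submodule ℝ X) [FiniteDimensional ℝ W] {δ : ℝ} (hδ : 0 < δ) :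
    ∃ (u : X) (φ : X →L[ℝ] ℝ), ‖u‖ ≤ δ ∧ P u = 0 ∧ 0 < φ u ∧ ∀ w ∈ W, φ w = 0 := by
  obtain ⟨y, hy, hPy, hWy, -⟩ := h.exists_almostL1Orthogonal_mem_ker P W one_half_lt_one 0
    (norm_zero.trans_le zero_le_one) (map_zero P) one_pos
  obtain ⟨φ, hφy, hφW⟩ :=
    exists_apply_eq_one_of_notMem W.closed_of_finiteDimensional (hWy.notMem one_half_pos)
  refine ⟨δ • y, φ, ?_, by simp [hPy], by simpa [hφy] using hδ, hφW⟩
  rw [norm_smul, Real.norm_of_nonneg hδ.le]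
  exact mul_le_of_le_one_right hδ.le hy

theorem almostL1Reproducing_iUnion {F : ℕ → Finset X} (hF : Monotone F)
    (happrox : ∀ n : ℕ, ∀ x ∈ F n, ∃ p ∈ convexHull ℝ {b | b ∈ F (n + 1) ∧
      AlmostL1Orthogonal (Submodule.span ℝ (F n : Set X)) (1 - 1 / ((n : ℝ) + 1)) b},
      dist x p < 1 / ((n : ℝ) + 1)) :
    AlmostL1Reproducing (⋃ n, (F n : Set X)) := by
  intro t ht c hc x hx
  have hmem : ∀ z ∈ ⋃ n, (F n : Set X), ∀ᶠ n in atTop, z ∈ F n := fun z hz => by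
    obtain ⟨m, hm⟩ := mem_iUnion.1 hz
    exact eventually_atTop.2 ⟨m, fun n hn => hF hn hm⟩
  have htF : ∀ᶠ n in atTop, t ⊆ F n :=
    (Finset.eventually_all t).2 fun z hz => hmem z (ht hz)
  have hsmall : ∀ δ > 0, ∀ᶠ n : ℕ in atTop, 1 / ((n : ℝ) + 1) < δ := fun δ hδ =>
    tendsto_one_div_add_atTop_nhds_zero_nat.eventually_lt_const hδ
  refine isClosed_closedAbsConvexHull.closure_subset (Metric.mem_closure_iff.2 fun ε hε => ?_)
  obtain ⟨n, ⟨⟨htn, hxn⟩, hεn⟩, hcn⟩ :=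
    (((htF.and (hmem x hx)).and (hsmall ε hε)).and (hsmall (1 - c) (sub_pos.2 hc))).exists
  obtain ⟨p, hp, hxp⟩ := happrox n x hxn
  have hsub : {b | b ∈ F (n + 1) ∧
      AlmostL1Orthogonal (Submodule.span ℝ (F n : Set X)) (1 - 1 / ((n : ℝ) + 1)) b} ⊆
      {b ∈ ⋃ n, (F n : Set X) | AlmostL1Orthogonal (Submodule.span ℝ (t : Set X)) c b} :=
    fun b hb => ⟨mem_iUnion_of_mem (n + 1) hb.1,
      hb.2.mono (Submodule.span_mono (Finset.coe_subset.2 htn)) (by linarith)⟩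
  exact ⟨p, convexHull_min (hsub.trans subset_closedAbsConvexHull) absConvex_convexClosedHull.2 hp,
    hxp.trans hεn⟩

variable (X) in
/-- A finite stage of the simultaneous construction of an almost `ℓ¹`-reproducing set (`points`)
and of a biorthogonal sequence (`vectors`, `functionals`). -/
structure Stage where
  points : Finset X
  vectors : Finset X
  functionals : Finset (X →L[ℝ] ℝ)

namespace Stage

/-- The invariant of the construction: the points lie in the unit ball and in the kernels of all
functionals. -/
def Admissible (s : Stage X) : Prop :=
  ∀ x ∈ s.points, ‖x‖ ≤ 1 ∧ ∀ φ ∈ s.functionals, φ x = 0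

/-- The `n`-th step of the construction adds one biorthogonal pair, and points generating the old
ones up to the tolerance `1 / (n + 1)`. -/
structure Step (n : ℕ) (s s' : Stage X) : Prop where
  points_subset : s.points ⊆ s'.points
  vectors_subset : s.vectors ⊆ s'.vectors
  functionals_subset : s.functionals ⊆ s'.functionals
  exists_pair : ∃ u ∈ s'.vectors, ∃ φ ∈ s'.functionals, ‖u‖ ≤ 1 / ((n : ℝ) + 1) ∧ 0 < φ u ∧
    (∀ ψ ∈ s.functionals, ψ u = 0) ∧ ∀ v ∈ s.vectors, φ v = 0
  approx : ∀ x ∈ s.points, ∃ p ∈ convexHull ℝ {b | b ∈ s'.points ∧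
    AlmostL1Orthogonal (Submodule.span ℝ (s.points : Set X)) (1 - 1 / ((n : ℝ) + 1)) b},
    dist x p < 1 / ((n : ℝ) + 1)

theorem Admissible.exists_step {s : Stage X} (hs : s.Admissible) (h : DaugavetProperty X)
    (n : ℕ) : ∃ s' : Stage X, s'.Admissible ∧ s.Step n s' := by
  classical
  let P : X →L[ℝ] s.functionals → ℝ := .pi fun φ => φ
  have hP : ∀ x, P x = 0 ↔ ∀ φ ∈ s.functionals, φ x = 0 := fun x => by simp [P, funext_iff]
  have hn : 0 < 1 / ((n : ℝ) + 1) := Nat.one_div_pos_of_nat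
  obtain ⟨D, hD, happrox⟩ := exists_finset_subset_forall_dist_lt (fun x hx =>
    h.mem_closure_convexHull_almostL1Orthogonal P (Submodule.span ℝ (s.points : Set X))
      (sub_lt_self 1 hn) (hs x hx).1 ((hP x).2 (hs x hx).2)) hn
  let W : Submodule ℝ X := Submodule.span ℝ ((s.points ∪ D ∪ s.vectors : Finset X) : Set X)
  obtain ⟨u, φ, hu, hPu, hφu, hφW⟩ := h.exists_small_mem_ker_pos_apply P W hn
  have hφ : ∀ x ∈ s.points ∪ D ∪ s.vectors, φ x = 0 := fun x hx => hφW x (Submodule.subset_span hx)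
  refine ⟨⟨s.points ∪ D, insert u s.vectors, insert φ s.functionals⟩, fun x hx => ?_,
    Finset.subset_union_left, Finset.subset_insert _ _, Finset.subset_insert _ _,
    ⟨u, Finset.mem_insert_self _ _, φ, Finset.mem_insert_self _ _, hu, hφu, (hP u).1 hPu,
      fun v hv => hφ v (Finset.mem_union_right _ hv)⟩, fun x hx => ?_⟩
  · have hx' : ‖x‖ ≤ 1 ∧ ∀ ψ ∈ s.functionals, ψ x = 0 :=
      (Finset.mem_union.1 hx).elim (hs x) fun hxD => ⟨(hD hxD).1, (hP x).1 (hD hxD).2.1⟩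
    exact ⟨hx'.1, Finset.forall_mem_insert .. |>.2 ⟨hφ x (Finset.mem_union_left _ hx), hx'.2⟩⟩
  · obtain ⟨p, hp, hxp⟩ := happrox x hx
    refine ⟨p, convexHull_mono (fun b hb => ?_) hp, hxp⟩
    exact ⟨Finset.mem_union_right _ hb, (hD hb).2.2⟩

end Stage

theorem DaugavetProperty.exists_stages (h : DaugavetProperty X) {x : X} (hx : ‖x‖ ≤ 1) :
    ∃ s : ℕ → Stage X, x ∈ (s 0).points ∧ (∀ n, (s n).Admissible) ∧
      ∀ n, (s n).Step n (s (n + 1)) := by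
  have hadm : (⟨{x}, ∅, ∅⟩ : Stage X).Admissible := by simpa [Stage.Admissible] using hx
  obtain ⟨s, hs₀, hs, hstep⟩ := exists_seq_of_step hadm fun n _ hs => hs.exists_step h n
  exact ⟨s, by simp [hs₀], hs, hstep⟩

theorem DaugavetProperty.exists_almostL1Reproducing (h : DaugavetProperty X) :
    ∃ (D : Set X) (u : ℕ → X) (φ : ℕ → X →L[ℝ] ℝ), D.Countable ∧ D ⊆ Metric.closedBall 0 1 ∧
      (∃ x ∈ D, x ≠ 0) ∧ AlmostL1Reproducing D ∧ Tendsto u atTop (𝓝 0) ∧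
      (∀ j, 0 < φ j (u j)) ∧ (∀ i j, i ≠ j → φ i (u j) = 0) ∧ ∀ i, ∀ x ∈ D, φ i x = 0 := by
  have := h.nontrivial
  obtain ⟨x, hx⟩ := exists_norm_eq X zero_le_one
  obtain ⟨s, hxs, hs, hstep⟩ := h.exists_stages hx.le
  have hpoints : Monotone fun n => (s n).points :=
    monotone_nat_of_le_succ fun n => (hstep n).points_subset
  have hvectors : Monotone fun n => (s n).vectors :=
    monotone_nat_of_le_succ fun n => (hstep n).vectors_subset
  have hfunctionals : Monotone fun n => (s n).functionals :=
    monotone_nat_of_le_succ fun n => (hstep n).functionals_subset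
  choose u hu φ hφ hnorm hpos hker hzero using fun n => (hstep n).exists_pair
  refine ⟨⋃ n, ((s n).points : Set X), u, φ, countable_iUnion fun n => (s n).points.countable_toSet,
    iUnion_subset fun n z hz => mem_closedBall_zero_iff.2 (hs n z hz).1,
    ⟨x, mem_iUnion_of_mem 0 hxs, norm_ne_zero_iff.1 (hx.trans_ne one_ne_zero)⟩,
    almostL1Reproducing_iUnion hpoints fun n => (hstep n).approx,
    squeeze_zero_norm hnorm tendsto_one_div_add_atTop_nhds_zero_nat, hpos, fun i j hij => ?_,
    fun i z hz => ?_⟩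
  · rcases hij.lt_or_gt with hij | hji
    · exact hker j _ (hfunctionals (Nat.succ_le_of_lt hij) (hφ i))
    · exact hzero i _ (hvectors (Nat.succ_le_of_lt hji) (hu j))
  · obtain ⟨n, hzn⟩ := mem_iUnion.1 hz
    exact (hs (max n (i + 1)) z (hpoints (le_max_left _ _) hzn)).2 _
      (hfunctionals (le_max_right _ _) (hφ i))

end Construction

theorem exists_symmetric_scd_sets_inter_not_scd_general (h : DaugavetProperty X) :
    ∃ W₁ W₂ : Set X,
      Convex ℝ W₁ ∧ IsClosed W₁ ∧ IsBounded W₁ ∧ W₁ = -W₁ ∧ IsSCD W₁ ∧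
      Convex ℝ W₂ ∧ IsClosed W₂ ∧ IsBounded W₂ ∧ W₂ = -W₂ ∧ IsSCD W₂ ∧
      (W₁ ∩ W₂).Nonempty ∧ ¬ IsSCD (W₁ ∩ W₂) := by
  obtain ⟨D, u, φ, hcount, hball, ⟨x, hxD, hx⟩, hD, hu, hφu, hφ, hφD⟩ :=
    h.exists_almostL1Reproducing
  obtain ⟨s₁, s₂, hbdd₁, hbdd₂, hscd₁, hscd₂, hinter⟩ :=
    exists_isSCD_inter_eq_closedAbsConvexHull hcount ⟨x, hxD⟩
      (Metric.isBounded_closedBall.subset hball) hu hφu hφ hφD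
  refine ⟨closedAbsConvexHull ℝ s₁, closedAbsConvexHull ℝ s₂,
    absConvex_convexClosedHull.2, isClosed_closedAbsConvexHull,
    isBounded_closedAbsConvexHull hbdd₁, absConvex_convexClosedHull.1.neg_eq.symm, hscd₁,
    absConvex_convexClosedHull.2, isClosed_closedAbsConvexHull,
    isBounded_closedAbsConvexHull hbdd₂, absConvex_convexClosedHull.1.neg_eq.symm, hscd₂, ?_⟩
  rw [hinter]
  exact ⟨⟨x, subset_closedAbsConvexHull hxD⟩, hD.not_isSCD hxD hx⟩

theorem exists_symmetric_scd_sets_inter_not_scd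
    {Y : Type*} [NormedAddCommGroup Y] [NormedSpace ℝ Y] [CompleteSpace Y]
    (h : DaugavetProperty Y) :
    ∃ W₁ W₂ : Set Y,
      Convex ℝ W₁ ∧ IsClosed W₁ ∧ IsBounded W₁ ∧ W₁ = -W₁ ∧ IsSCD W₁ ∧
      Convex ℝ W₂ ∧ IsClosed W₂ ∧ IsBounded W₂ ∧ W₂ = -W₂ ∧ IsSCD W₂ ∧
      (W₁ ∩ W₂).Nonempty ∧ ¬ IsSCD (W₁ ∩ W₂) :=
  exists_symmetric_scd_sets_inter_not_scd_general h
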